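/- For every ε > 0 there exists C_ε > 0 with the following property. For all dyadic N, N₁, N₂, N₃ ≥ 1, all m ∈ ℤ, and every fixed n₂ ∈ ℤ², the number of triples (n, n₁, n₃) with (n, n₁, n₂, n₃) ∈ S^{𝐍,(m)} is at most C_ε · min( N² (min(N₁, N₃))^ε, (N N₁)^{1+ε}, (N N₃)^{1+ε}, (N₁ N₃)^{1+ε} ), uniformly in n₂ and m. -/

import Mathlib

/-- Euclidean norm of a lattice point in `ℤ²`. -/
noncomputable def znorm (n : ℤ × ℤ) : ℝ := Real.sqrt ((n.1 : ℝ) ^ 2 + (n.2 : ℝ) ^ 2)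

/-- Squared Euclidean norm `|n|²` of `n ∈ ℤ²`, as an integer. -/
def nsq (n : ℤ × ℤ) : ℤ := n.1 ^ 2 + n.2 ^ 2

/-- `φ(n̄) = |n|² − |n₁|² + |n₂|² − |n₃|²`. -/
def phiFn (n n₁ n₂ n₃ : ℤ × ℤ) : ℤ := nsq n - nsq n₁ + nsq n₂ - nsq n₃

/-- `N` is a dyadic number: `N = 2^k` for some integer `k ≥ 0`. -/
def IsDyadic (N : ℝ) : Prop := ∃ k : ℕ, N = 2 ^ k

/-- `|n| ∼ N`: for dyadic `N ≥ 2` this means `N/2 < |n| ≤ N`; for `N = 1` it means `|n| ≤ 1`. -/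
def simDyadic (N : ℝ) (n : ℤ × ℤ) : Prop :=
  (N = 1 ∧ znorm n ≤ 1) ∨ (N ≠ 1 ∧ N / 2 < znorm n ∧ znorm n ≤ N)

/-- Membership in the set `S^{𝐍,(m)}`. -/
def SMem (N N₁ N₂ N₃ : ℝ) (m : ℤ) (n n₁ n₂ n₃ : ℤ × ℤ) : Prop :=
  n = n₁ - n₂ + n₃ ∧ n ≠ n₁ ∧ n ≠ n₃ ∧ phiFn n n₁ n₂ n₃ = m ∧
    simDyadic N n ∧ simDyadic N₁ n₁ ∧ simDyadic N₂ n₂ ∧ simDyadic N₃ n₃ 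

/-!
Fix `n₂ = q` and put `a = n₁ - q`, `b = n₃ - q`, so that `n = q + a + b` and `φ = 2 (a ⬝ b)`, with
`a, b ≠ 0`.

For fixed `n` the identity `|a - b|² = |a + b|² - 4 (a ⬝ b)` puts `2 n₁ - n - q` on a fixed circle
about the origin, inside a region of diameter `O(N₁)`. A lattice triangle has area at least `1/2`,
so three such points bound the radius by a power of `N₁`, and the divisor bound in `ℤ[i]` leaves
`O(N₁^ε)` choices.

For fixed `n₁` the points `n₃`, and likewise the points `n`, lie on a line orthogonal to `a`, where
the spacing of lattice points is comparable to the height `h(a)` of the primitive vector along `a`.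
A box of size `S` contains `O(S / h(a) + 1)` of them. In a box of size `R` only `O(R)` points `n₁`
have a given height `h(a) ≤ R`, so the sum over `n₁` is harmonic and loses only a logarithm.
-/

open Finset

/-! ### The divisor bound -/

lemma natCast_add_one_le_mul_exp {y : ℝ} (hy : 0 < y) (e : ℕ) :
    (e + 1 : ℝ) ≤ (1 + 1 / y) * Real.exp (e * y) :=
  calc (e + 1 : ℝ) ≤ e + 1 + (e * y + 1 / y) := le_add_of_nonneg_right (by positivity)
    _ = (1 + 1 / y) * (e * y + 1) := by field_simp; ring
    _ ≤ (1 + 1 / y) * Real.exp (e * y) := by gcongr; exact Real.add_one_le_exp _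

lemma natCast_add_one_le_mul_pow_rpow {δ p : ℝ} (hδ : 0 < δ) (hp : 2 ≤ p) (e : ℕ) :
    (e + 1 : ℝ) ≤ (1 + 1 / (δ * Real.log 2)) * (p ^ e) ^ δ := by
  have : 0 < Real.log 2 := Real.log_pos one_lt_two
  have hexp : Real.exp (e * (δ * Real.log 2)) = ((2 : ℝ) ^ e) ^ δ := by
    rw [Real.rpow_def_of_pos (by positivity), Real.log_pow]
    ring_nf
  calc (e + 1 : ℝ) ≤ (1 + 1 / (δ * Real.log 2)) * ((2 : ℝ) ^ e) ^ δ :=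
        hexp ▸ natCast_add_one_le_mul_exp (by positivity) e
    _ ≤ (1 + 1 / (δ * Real.log 2)) * (p ^ e) ^ δ := by gcongr

lemma natCast_add_one_le_pow_rpow {δ p : ℝ} (hp₀ : 0 ≤ p) (hp : 2 ≤ p ^ δ) (e : ℕ) :
    (e + 1 : ℝ) ≤ (p ^ e) ^ δ :=
  calc (e + 1 : ℝ) ≤ 2 ^ e := by exact_mod_cast Nat.lt_two_pow_self
    _ ≤ (p ^ δ) ^ e := by gcongr
    _ = (p ^ e) ^ δ := Real.rpow_pow_comm hp₀ δ e

lemma natCast_rpow_eq_prod_primeFactors {n : ℕ} (hn : n ≠ 0) (δ : ℝ) :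
    (n : ℝ) ^ δ = ∏ p ∈ n.primeFactors, ((p : ℝ) ^ n.factorization p) ^ δ := by
  rw [Real.finsetProd_rpow _ _ fun p _ ↦ by positivity]
  conv_lhs => rw [← Nat.prod_factorization_pow_eq_self hn, Finsupp.prod]
  push_cast
  rfl

lemma prod_ite_lt_le_pow (s : Finset ℕ) {c : ℝ} (hc : 1 ≤ c) (P : ℕ) :
    ∏ p ∈ s, (if p < P then c else 1) ≤ c ^ P := by
  rw [prod_ite, prod_const, prod_const_one, mul_one]
  refine pow_le_pow_right₀ hc ?_
  calc #{p ∈ s | p < P} ≤ #(range P) :=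
        card_le_card fun p hp ↦ mem_range.mpr (mem_filter.mp hp).2
    _ = P := card_range P

theorem exists_card_divisors_le_mul_rpow {δ : ℝ} (hδ : 0 < δ) :
    ∃ C : ℝ, 1 ≤ C ∧ ∀ n : ℕ, n ≠ 0 → (#n.divisors : ℝ) ≤ C * (n : ℝ) ^ δ := by
  set c : ℝ := 1 + 1 / (δ * Real.log 2)
  have hc : 1 ≤ c := by
    have : 0 < Real.log 2 := Real.log_pos one_lt_two
    exact le_add_of_nonneg_right (by positivity)
  obtain ⟨P, hP⟩ := exists_nat_gt ((2 : ℝ) ^ δ⁻¹)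
  -- Only the primes below `P ≥ 2 ^ (1 / δ)` can contribute a factor larger than `1` to `C`.
  refine ⟨c ^ P, one_le_pow₀ hc, fun n hn ↦ ?_⟩
  have hfactor : ∀ p ∈ n.primeFactors, (n.factorization p + 1 : ℝ) ≤
      (if p < P then c else 1) * ((p : ℝ) ^ n.factorization p) ^ δ := by
    intro p hp
    split_ifs with hpP
    · exact natCast_add_one_le_mul_pow_rpow hδ
        (mod_cast (Nat.prime_of_mem_primeFactors hp).two_le) _
    · rw [one_mul]
      refine natCast_add_one_le_pow_rpow p.cast_nonneg ?_ _
      have hPp : (2 : ℝ) ^ δ⁻¹ ≤ p := hP.le.trans (mod_cast not_lt.mp hpP)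
      exact (Real.rpow_inv_le_iff_of_pos zero_le_two p.cast_nonneg hδ).mp hPp
  calc (#n.divisors : ℝ) = ∏ p ∈ n.primeFactors, (n.factorization p + 1 : ℝ) := by
        rw [Nat.card_divisors hn]; push_cast; rfl
    _ ≤ ∏ p ∈ n.primeFactors,
          (if p < P then c else 1) * ((p : ℝ) ^ n.factorization p) ^ δ :=
        prod_le_prod (fun _ _ ↦ by positivity) hfactor
    _ = (∏ p ∈ n.primeFactors, if p < P then c else 1) * (n : ℝ) ^ δ := by
        rw [prod_mul_distrib, natCast_rpow_eq_prod_primeFactors hn]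
    _ ≤ c ^ P * (n : ℝ) ^ δ := by gcongr; exact prod_ite_lt_le_pow _ hc P

/-! ### Gaussian integers of given norm -/

-- `f` is `2` for inert `p` and `1` otherwise.
lemma exists_gaussianInt_prime_dvd_natCast {p : ℕ} (hp : p.Prime) :
    ∃ π : GaussianInt, Prime π ∧ π ∣ (p : GaussianInt) ∧ ∃ f, 0 < f ∧ π.norm = (p : ℤ) ^ f := by
  have hunit : ¬IsUnit (p : GaussianInt) := by
    rw [← Zsqrtd.norm_eq_one_iff' (by norm_num), Zsqrtd.norm_natCast]
    exact_mod_cast fun h ↦ hp.ne_one (Nat.eq_one_of_mul_eq_one_right h)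
  obtain ⟨π, hπ, hπp⟩ :=
    WfDvdMonoid.exists_irreducible_factor hunit (Nat.cast_ne_zero.mpr hp.ne_zero)
  have hnorm : π.norm.natAbs ∣ p ^ 2 := by
    obtain ⟨w, hw⟩ := hπp
    have := congrArg (fun z ↦ (Zsqrtd.norm z).natAbs) hw
    simp only [Zsqrtd.norm_natCast, Zsqrtd.norm_mul, Int.natAbs_mul, Int.natAbs_natCast] at this
    exact ⟨w.norm.natAbs, by rw [sq, this]⟩
  obtain ⟨f, -, hf⟩ := (Nat.dvd_prime_pow hp).mp hnorm
  refine ⟨π, hπ.prime, hπp, f, Nat.pos_of_ne_zero ?_, ?_⟩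
  · rintro rfl
    exact hπ.not_isUnit (Zsqrtd.norm_eq_one_iff.mp (by simpa using hf))
  · rw [← GaussianInt.abs_natCast_norm, hf, Nat.cast_pow]

lemma dvd_or_star_dvd_of_dvd_norm {π z : GaussianInt} (hπ : Prime π)
    (h : π ∣ (z.norm : GaussianInt)) : π ∣ z ∨ star π ∣ z := by
  rw [Zsqrtd.norm_eq_mul_conj] at h
  refine (hπ.dvd_or_dvd h).imp_right ?_
  rintro ⟨w, hw⟩
  exact ⟨star w, by rw [← star_star z, hw, star_mul, mul_comm]⟩

lemma le_and_eq_of_pow_mul_eq {p K e f : ℕ} (hp : p ≠ 0) (hK : ¬p ∣ K) {M : ℤ}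
    (h : (p : ℤ) ^ f * M = (p : ℤ) ^ e * K) : f ≤ e ∧ M = (p : ℤ) ^ (e - f) * K := by
  have hp₀ : (p : ℤ) ≠ 0 := Nat.cast_ne_zero.mpr hp
  have hfe : f ≤ e := by
    by_contra! hef
    have hKM : (K : ℤ) = (p : ℤ) ^ (f - e) * M := by
      refine mul_left_cancel₀ (pow_ne_zero e hp₀) ?_
      rw [← h, ← mul_assoc, ← pow_add, Nat.add_sub_cancel' hef.le]
    exact hK (Int.natCast_dvd_natCast.mp
      (hKM ▸ (dvd_pow_self _ (Nat.sub_ne_zero_of_lt hef)).mul_right M))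
  refine ⟨hfe, mul_left_cancel₀ (pow_ne_zero f hp₀) ?_⟩
  rw [h, ← mul_assoc, ← pow_add, Nat.add_sub_cancel' hfe]

lemma exists_eq_mul_of_norm_eq_pow_mul {p K f : ℕ} (hp : p ≠ 0) (hK : ¬p ∣ K)
    {π : GaussianInt} (hπ : Prime π) (hπp : π ∣ (p : GaussianInt)) (hf : 0 < f)
    (hnorm : π.norm = (p : ℤ) ^ f) (e : ℕ) {z : GaussianInt} (hz : z.norm = (p : ℤ) ^ e * K) :
    ∃ i j w, i + j = e / f ∧ z = π ^ i * star π ^ j * w ∧ w.norm = K := by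
  induction e using Nat.strong_induction_on generalizing z with
  | _ e ih =>
  rcases e.eq_zero_or_pos with rfl | he
  · exact ⟨0, 0, z, by simp, by simp, by simpa using hz⟩
  have hdvd : π ∣ (z.norm : GaussianInt) := by
    rw [hz]
    push_cast
    exact (hπp.trans (dvd_pow_self _ he.ne')).mul_right _
  rcases dvd_or_star_dvd_of_dvd_norm hπ hdvd with ⟨z', rfl⟩ | ⟨z', rfl⟩
  · obtain ⟨hfe, hz'⟩ := le_and_eq_of_pow_mul_eq (e := e) (f := f) (M := z'.norm) hp hK
      (by rw [← hz, Zsqrtd.norm_mul, hnorm])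
    obtain ⟨i, j, w, hij, rfl, hw⟩ := ih (e - f) (by omega) hz'
    exact ⟨i + 1, j, w, by rw [Nat.div_eq_sub_div hf hfe, ← hij]; ring, by ring, hw⟩
  · obtain ⟨hfe, hz'⟩ := le_and_eq_of_pow_mul_eq (e := e) (f := f) (M := z'.norm) hp hK
      (by rw [← hz, Zsqrtd.norm_mul, Zsqrtd.norm_conj, hnorm])
    obtain ⟨i, j, w, hij, rfl, hw⟩ := ih (e - f) (by omega) hz'
    exact ⟨i, j + 1, w, by rw [Nat.div_eq_sub_div hf hfe, ← hij]; ring, by ring, hw⟩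

lemma encard_gaussianInt_norm_eq_prime_pow_mul_le {p K : ℕ} (hp : p.Prime) (hK : ¬p ∣ K) (e : ℕ) :
    {z : GaussianInt | z.norm = (p ^ e * K : ℕ)}.encard ≤
      (e + 1 : ℕ) * {z : GaussianInt | z.norm = K}.encard := by
  obtain ⟨π, hπ, hπp, f, hf, hnorm⟩ := exists_gaussianInt_prime_dvd_natCast hp
  set S := {z : GaussianInt | z.norm = K}
  have hsub : {z : GaussianInt | z.norm = (p ^ e * K : ℕ)} ⊆
      ⋃ ij ∈ antidiagonal (e / f), (π ^ ij.1 * star π ^ ij.2 * ·) '' S := by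
    intro z hz
    obtain ⟨i, j, w, hij, rfl, hw⟩ := exists_eq_mul_of_norm_eq_pow_mul hp.ne_zero hK hπ hπp hf
      hnorm e (z := z) (by simpa using hz)
    exact Set.mem_biUnion (x := (i, j)) (mem_antidiagonal.mpr hij) ⟨w, hw, rfl⟩
  calc _ ≤ ∑ ij ∈ antidiagonal (e / f), ((π ^ ij.1 * star π ^ ij.2 * ·) '' S).encard :=
        (Set.encard_le_encard hsub).trans (set_encard_biUnion_le _ _)
    _ ≤ ∑ _ij ∈ antidiagonal (e / f), S.encard := sum_le_sum fun _ _ ↦ Set.encard_image_le _ _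
    _ = (e / f + 1 : ℕ) * S.encard := by
        rw [sum_const, Finset.Nat.card_antidiagonal, nsmul_eq_mul]
    _ ≤ (e + 1 : ℕ) * S.encard := by gcongr; exact Nat.div_le_self e f

lemma encard_gaussianInt_norm_eq_one_le : {z : GaussianInt | z.norm = 1}.encard ≤ 4 := by
  have hsub : {z : GaussianInt | z.norm = 1} ⊆
      (({⟨1, 0⟩, ⟨-1, 0⟩, ⟨0, 1⟩, ⟨0, -1⟩} : Finset GaussianInt) : Set GaussianInt) := by
    rintro ⟨a, b⟩ hab
    replace hab : a * a + b * b = 1 := by simpa [Zsqrtd.norm_def] using hab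
    have ha : -1 ≤ a ∧ a ≤ 1 := by constructor <;> nlinarith
    have hb : -1 ≤ b ∧ b ≤ 1 := by constructor <;> nlinarith
    obtain ⟨ha₁, ha₂⟩ := ha
    obtain ⟨hb₁, hb₂⟩ := hb
    interval_cases a <;> interval_cases b <;> simp_all
  refine (Set.encard_le_encard hsub).trans ?_
  rw [Set.encard_coe_eq_coe_finsetCard]
  exact_mod_cast card_le_four

theorem encard_gaussianInt_norm_eq_le {n : ℕ} (hn : n ≠ 0) :
    {z : GaussianInt | z.norm = n}.encard ≤ (4 * #n.divisors : ℕ) := by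
  induction n using Nat.recOnPrimePow with
  | zero => exact absurd rfl hn
  | one => simpa using encard_gaussianInt_norm_eq_one_le
  | prime_pow_mul a p e hp hpa _ ih =>
    have ha : a ≠ 0 := right_ne_zero_of_mul hn
    have hcop : Nat.Coprime (p ^ e) a := (hp.coprime_iff_not_dvd.mpr hpa).pow_left e
    calc _ ≤ (e + 1 : ℕ) * {z : GaussianInt | z.norm = a}.encard :=
          encard_gaussianInt_norm_eq_prime_pow_mul_le hp hpa e
      _ ≤ (e + 1 : ℕ) * (4 * #a.divisors : ℕ) := by gcongr; exact ih ha
      _ = (4 * #(p ^ e * a).divisors : ℕ) := by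
          rw [hcop.card_divisors_mul, Nat.divisors_prime_pow hp, card_map, card_range]
          push_cast
          ring

/-! ### Lattice points on circles -/

lemma nsq_pos {x : ℤ × ℤ} (hx : x ≠ 0) : 0 < nsq x := by
  obtain h | h := not_and_or.mp fun h : x.1 = 0 ∧ x.2 = 0 ↦ hx (Prod.ext h.1 h.2)
  · exact add_pos_of_pos_of_nonneg (by positivity) (sq_nonneg _)
  · exact add_pos_of_nonneg_of_pos (sq_nonneg _) (by positivity)

-- The circumradius formula `4 * R * Δ = a * b * c`, squared.
lemma four_mul_mul_cross_sq_eq {K : ℤ} {x y z : ℤ × ℤ} (hx : nsq x = K) (hy : nsq y = K)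
    (hz : nsq z = K) :
    4 * K * ((y - x).1 * (z - x).2 - (y - x).2 * (z - x).1) ^ 2 =
      nsq (y - x) * nsq (z - x) * nsq (y - z) := by
  obtain ⟨v, rfl⟩ : ∃ v, y = x + v := ⟨y - x, by abel⟩
  obtain ⟨w, rfl⟩ : ∃ w, z = x + w := ⟨z - x, by abel⟩
  simp only [nsq, add_sub_cancel_left, add_sub_add_left_eq_sub, Prod.fst_add, Prod.snd_add,
    Prod.fst_sub, Prod.snd_sub] at *
  have hv : nsq v = -2 * (x.1 * v.1 + x.2 * v.2) := by rw [nsq]; linarith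
  have hw : nsq w = -2 * (x.1 * w.1 + x.2 * w.2) := by rw [nsq]; linarith
  set Δ := v.1 * w.2 - v.2 * w.1
  have h₁ : 2 * x.1 * Δ = nsq w * v.2 - nsq v * w.2 := by rw [hv, hw]; ring
  have h₂ : 2 * x.2 * Δ = nsq v * w.1 - nsq w * v.1 := by rw [hv, hw]; ring
  calc 4 * K * Δ ^ 2 = (2 * x.1 * Δ) ^ 2 + (2 * x.2 * Δ) ^ 2 := by rw [← hx]; ring
    _ = (nsq w * v.2 - nsq v * w.2) ^ 2 + (nsq v * w.1 - nsq w * v.1) ^ 2 := by rw [h₁, h₂]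
    _ = _ := by simp only [nsq]; ring

lemma four_mul_le_nsq_mul_nsq_mul_nsq {K : ℤ} {x y z : ℤ × ℤ} (hx : nsq x = K) (hy : nsq y = K)
    (hz : nsq z = K) (hxy : x ≠ y) (hxz : x ≠ z) (hyz : y ≠ z) :
    0 < K ∧ 4 * K ≤ nsq (y - x) * nsq (z - x) * nsq (y - z) := by
  have hpos : 0 < nsq (y - x) * nsq (z - x) * nsq (y - z) :=
    mul_pos (mul_pos (nsq_pos (sub_ne_zero.mpr hxy.symm)) (nsq_pos (sub_ne_zero.mpr hxz.symm)))
      (nsq_pos (sub_ne_zero.mpr hyz))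
  rw [← four_mul_mul_cross_sq_eq hx hy hz] at hpos ⊢
  have hK : 0 < K := by linarith [pos_of_mul_pos_left hpos (sq_nonneg _)]
  exact ⟨hK, le_mul_of_one_le_right (by linarith) (pos_of_mul_pos_right hpos (by linarith))⟩

lemma card_le_of_forall_nsq_eq {k : ℕ} (hk : k ≠ 0) {T : Finset (ℤ × ℤ)}
    (hT : ∀ x ∈ T, nsq x = k) : #T ≤ 4 * #k.divisors := by
  have hmaps : Set.MapsTo (fun x : ℤ × ℤ ↦ (⟨x.1, x.2⟩ : GaussianInt)) T
      {z : GaussianInt | z.norm = k} := by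
    intro x hx
    rw [Set.mem_ofPred_eq, Zsqrtd.norm_def, ← hT x hx, nsq]
    ring
  have hinj : Function.Injective fun x : ℤ × ℤ ↦ (⟨x.1, x.2⟩ : GaussianInt) :=
    fun x y hxy ↦ Prod.ext (congrArg Zsqrtd.re hxy) (congrArg Zsqrtd.im hxy)
  have := (Set.encard_le_encard_of_injOn hmaps hinj.injOn).trans (encard_gaussianInt_norm_eq_le hk)
  rw [Set.encard_coe_eq_coe_finsetCard] at this
  exact_mod_cast this

-- The radius does not matter: three points force `4 * K ≤ L ^ 3`.
theorem exists_card_le_rpow_of_forall_nsq_eq {ε : ℝ} (hε : 0 < ε) :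
    ∃ C : ℝ, 1 ≤ C ∧ ∀ (L : ℝ) (K : ℤ) (T : Finset (ℤ × ℤ)), 1 ≤ L → (∀ x ∈ T, nsq x = K) →
      (∀ x ∈ T, ∀ y ∈ T, (nsq (x - y) : ℝ) ≤ L) → (#T : ℝ) ≤ C * L ^ ε := by
  obtain ⟨C, hC, hdiv⟩ := exists_card_divisors_le_mul_rpow (δ := ε / 3) (by positivity)
  refine ⟨4 * C, by linarith, fun L K T hL hK hdist ↦ ?_⟩
  have hLε : 1 ≤ L ^ ε := Real.one_le_rpow hL hε.le
  obtain hcard | hcard := le_or_gt #T 2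
  · calc (#T : ℝ) ≤ 4 * 1 * 1 := by norm_num; exact_mod_cast hcard.trans (by norm_num)
      _ ≤ 4 * C * L ^ ε := by gcongr
  obtain ⟨x, hx, y, hy, z, hz, hxy, hxz, hyz⟩ := two_lt_card.mp hcard
  obtain ⟨hK₀, hKle⟩ :=
    four_mul_le_nsq_mul_nsq_mul_nsq (hK x hx) (hK y hy) (hK z hz) hxy hxz hyz
  lift K to ℕ using hK₀.le with k
  have hk : k ≠ 0 := by omega
  have hnonneg (v : ℤ × ℤ) : (0 : ℝ) ≤ nsq v := by unfold nsq; positivity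
  have hkL : (k : ℝ) ≤ L ^ 3 :=
    calc (k : ℝ) ≤ nsq (y - x) * nsq (z - x) * nsq (y - z) := by
          exact_mod_cast (by omega : (k : ℤ) ≤ 4 * k).trans hKle
      _ ≤ L * L * L := by
          gcongr <;> first | exact hnonneg _ | exact hdist _ ‹_› _ ‹_›
      _ = L ^ 3 := by ring
  calc (#T : ℝ) ≤ 4 * #k.divisors := by exact_mod_cast card_le_of_forall_nsq_eq hk hK
    _ ≤ 4 * (C * (k : ℝ) ^ (ε / 3)) := by gcongr; exact hdiv k hk
    _ ≤ 4 * (C * (L ^ 3) ^ (ε / 3)) := by gcongr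
    _ = 4 * C * L ^ ε := by
        rw [← Real.rpow_natCast_mul (by positivity), Nat.cast_ofNat,
          mul_div_cancel₀ ε three_ne_zero, mul_assoc]

/-! ### Lattice points on lines -/

/-- The sup norm on `ℤ²`, valued in `ℕ` so that its level sets are the spheres `Finset.box`. -/
def supNorm (x : ℤ × ℤ) : ℕ := max x.1.natAbs x.2.natAbs

/-- The lattice points of sup norm at most `R`, for `0 ≤ R`: the box localizing a frequency. -/
noncomputable def latticeBox (R : ℝ) : Finset (ℤ × ℤ) :=
  Icc (-⌊R⌋₊ : ℤ) ⌊R⌋₊ ×ˢ Icc (-⌊R⌋₊ : ℤ) ⌊R⌋₊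

/-- The Euclidean inner product on `ℤ²`, in which `φ` factors as `2 (n₁ - n₂) ⬝ (n₃ - n₂)`. -/
def dot (x y : ℤ × ℤ) : ℤ := x.1 * y.1 + x.2 * y.2

/-- The primitive vector in the direction of `x`, and `0` for `x = 0`; its Euclidean norm is the
spacing of the lattice points on a line orthogonal to `x`. -/
def primitivePart (x : ℤ × ℤ) : ℤ × ℤ := (x.1 / x.1.gcd x.2, x.2 / x.1.gcd x.2)

lemma mem_latticeBox {R : ℝ} (hR : 0 ≤ R) {x : ℤ × ℤ} : x ∈ latticeBox R ↔ (supNorm x : ℝ) ≤ R := by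
  rw [← Nat.le_floor_iff hR, latticeBox, supNorm, mem_product, mem_Icc, mem_Icc]
  omega

lemma swap_mem_latticeBox {R : ℝ} {x : ℤ × ℤ} : x.swap ∈ latticeBox R ↔ x ∈ latticeBox R := by
  rw [latticeBox, mem_product, mem_product, Prod.fst_swap, Prod.snd_swap, and_comm]

lemma card_latticeBox_le {R : ℝ} (hR : 1 ≤ R) : (#(latticeBox R) : ℝ) ≤ 9 * R ^ 2 := by
  have hfloor : (⌊R⌋₊ : ℝ) ≤ R := Nat.floor_le (by linarith)
  have hcard : #(latticeBox R) = (2 * ⌊R⌋₊ + 1) ^ 2 := by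
    rw [latticeBox, card_product, Int.card_Icc, sq]
    congr 1 <;> omega
  calc (#(latticeBox R) : ℝ) = (2 * ⌊R⌋₊ + 1) ^ 2 := by exact_mod_cast hcard
    _ ≤ (3 * R) ^ 2 := by gcongr; linarith
    _ = 9 * R ^ 2 := by ring

lemma supNorm_swap (x : ℤ × ℤ) : supNorm x.swap = supNorm x := max_comm _ _

lemma dot_swap (x y : ℤ × ℤ) : dot x.swap y.swap = dot x y := add_comm _ _

lemma card_le_div_add_one_of_forall_modEq {a b k : ℤ} (hab : a ≤ b) (hk : 0 < k) {T : Finset ℤ}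
    (hT : T ⊆ Icc a b) (hmod : ∀ x ∈ T, ∀ y ∈ T, x ≡ y [ZMOD k]) :
    (#T : ℝ) ≤ (b - a) / k + 1 := by
  have hmaps : ∀ x ∈ T, (x - a) / k ∈ Icc 0 ((b - a) / k) := by
    intro x hx
    obtain ⟨hax, hxb⟩ := mem_Icc.mp (hT hx)
    exact mem_Icc.mpr ⟨Int.ediv_nonneg (by omega) hk.le, Int.ediv_le_ediv hk (by omega)⟩
  have hinj : Set.InjOn (fun x ↦ (x - a) / k) T := by
    intro x hx y hy hxy
    have hrem : (x - a) % k = (y - a) % k := (hmod x hx y hy).sub_right a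
    have hx' := Int.mul_ediv_add_emod (x - a) k
    have hy' := Int.mul_ediv_add_emod (y - a) k
    rw [show (x - a) / k = (y - a) / k from hxy, hrem] at hx'
    linarith
  have hcard : (#T : ℤ) ≤ (b - a) / k + 1 := by
    have := card_le_card_of_injOn _ hmaps hinj
    have := Int.ediv_nonneg (sub_nonneg.mpr hab) hk.le
    rw [Int.card_Icc] at *
    omega
  calc (#T : ℝ) ≤ ((b - a) / k : ℤ) + 1 := by exact_mod_cast hcard
    _ ≤ (b - a) / k + 1 := by
        gcongr
        rw [← Int.cast_sub, le_div_iff₀ (by exact_mod_cast hk)]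
        exact_mod_cast Int.ediv_mul_le (b - a) hk.ne'

lemma card_filter_dot_eq_le_of_natAbs_le {b : ℤ × ℤ} (hb : IsCoprime b.1 b.2)
    (hle : b.1.natAbs ≤ b.2.natAbs) {S : ℝ} (hS : 0 ≤ S) (c : ℤ) :
    (#{y ∈ latticeBox S | dot b y = c} : ℝ) ≤ 2 * S / supNorm b + 1 := by
  have hb₂ : b.2 ≠ 0 := by
    intro h
    have h₁ : b.1 = 0 := by omega
    rw [h, h₁] at hb
    exact not_isCoprime_zero_zero hb
  set T := {y ∈ latticeBox S | dot b y = c}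
  have hT {y} (hy : y ∈ T) : b.1 * y.1 + b.2 * y.2 = c := (mem_filter.mp hy).2
  have hinj : Set.InjOn Prod.fst (T : Set (ℤ × ℤ)) := by
    intro y hy z hz hyz
    refine Prod.ext hyz (mul_left_cancel₀ hb₂ ?_)
    linear_combination hT hy - hT hz - b.1 * hyz
  have hmod : ∀ u ∈ T.image Prod.fst, ∀ v ∈ T.image Prod.fst, u ≡ v [ZMOD |b.2|] := by
    simp only [forall_mem_image]
    intro y hy z hz
    rw [Int.modEq_iff_dvd, abs_dvd]
    refine hb.symm.dvd_of_dvd_mul_left ⟨y.2 - z.2, ?_⟩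
    linear_combination hT hz - hT hy
  have hsub : T.image Prod.fst ⊆ Icc (-⌊S⌋₊ : ℤ) ⌊S⌋₊ := image_subset_iff.mpr fun y hy ↦
    (mem_product.mp (mem_filter.mp hy).1).1
  have hnorm : ((|b.2| : ℤ) : ℝ) = supNorm b := by
    rw [supNorm, max_eq_right hle, Int.abs_eq_natAbs, Int.cast_natCast]
  calc (#T : ℝ) = #(T.image Prod.fst) := by rw [card_image_of_injOn hinj]
    _ ≤ ((⌊S⌋₊ : ℤ) - (-⌊S⌋₊ : ℤ)) / (|b.2| : ℤ) + 1 := by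
        exact_mod_cast card_le_div_add_one_of_forall_modEq (by omega) (abs_pos.mpr hb₂) hsub hmod
    _ = 2 * ⌊S⌋₊ / supNorm b + 1 := by rw [hnorm]; push_cast; ring
    _ ≤ 2 * S / supNorm b + 1 := by gcongr; exact Nat.floor_le hS

lemma card_filter_dot_eq_le {b : ℤ × ℤ} (hb : IsCoprime b.1 b.2) {S : ℝ} (hS : 0 ≤ S) (c : ℤ) :
    (#{y ∈ latticeBox S | dot b y = c} : ℝ) ≤ 2 * S / supNorm b + 1 := by
  obtain hle | hle := le_total b.1.natAbs b.2.natAbs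
  · exact card_filter_dot_eq_le_of_natAbs_le hb hle hS c
  have hswap : #{y ∈ latticeBox S | dot b y = c} ≤ #{y ∈ latticeBox S | dot b.swap y = c} := by
    refine card_le_card_of_injOn Prod.swap (fun y hy ↦ ?_) Prod.swap_injective.injOn
    obtain ⟨hyS, hyc⟩ := mem_filter.mp hy
    exact mem_filter.mpr ⟨swap_mem_latticeBox.mpr hyS, (dot_swap b y).trans hyc⟩
  calc _ ≤ (#{y ∈ latticeBox S | dot b.swap y = c} : ℝ) := by exact_mod_cast hswap
    _ ≤ 2 * S / supNorm b + 1 :=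
        supNorm_swap b ▸ card_filter_dot_eq_le_of_natAbs_le (b := b.swap) hb.symm hle hS c

lemma exists_eq_smul_primitivePart {a : ℤ × ℤ} (ha : a ≠ 0) :
    ∃ g : ℤ, g ≠ 0 ∧ a = g • primitivePart a := by
  refine ⟨a.1.gcd a.2, ?_, Prod.ext ?_ ?_⟩
  · simpa [Int.gcd_eq_zero_iff, Prod.ext_iff] using ha
  · exact (Int.mul_ediv_cancel' (Int.gcd_dvd_left ..)).symm
  · exact (Int.mul_ediv_cancel' (Int.gcd_dvd_right ..)).symm

lemma isCoprime_primitivePart {a : ℤ × ℤ} (ha : a ≠ 0) :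
    IsCoprime (primitivePart a).1 (primitivePart a).2 := by
  refine Int.isCoprime_iff_gcd_eq_one.mpr (Int.gcd_ediv_gcd_ediv_gcd ?_)
  rw [Int.gcd_pos_iff]
  by_contra! h
  exact ha (Prod.ext h.1 h.2)

lemma dot_smul_left (g : ℤ) (x y : ℤ × ℤ) : dot (g • x) y = g * dot x y := by
  simp only [dot, Prod.smul_fst, Prod.smul_snd, smul_eq_mul]
  ring

lemma card_filter_dot_eq_le_of_ne_zero {a : ℤ × ℤ} (ha : a ≠ 0) {S : ℝ} (hS : 0 ≤ S) (c : ℤ) :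
    (#{y ∈ latticeBox S | dot a y = c} : ℝ) ≤ 2 * S / supNorm (primitivePart a) + 1 := by
  obtain ⟨g, hg, hga⟩ := exists_eq_smul_primitivePart ha
  have hsub : {y ∈ latticeBox S | dot a y = c} ⊆
      {y ∈ latticeBox S | dot (primitivePart a) y = c / g} := by
    refine monotone_filter_right _ fun y _ hy ↦ (Int.ediv_eq_of_eq_mul_right hg ?_).symm
    rw [← dot_smul_left, ← hga, hy]
  calc _ ≤ (#{y ∈ latticeBox S | dot (primitivePart a) y = c / g} : ℝ) := by
        exact_mod_cast card_le_card hsub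
    _ ≤ _ := card_filter_dot_eq_le (isCoprime_primitivePart ha) hS _

lemma card_filter_primitivePart_sub_eq_le {R : ℝ} (hR : 0 ≤ R) (q : ℤ × ℤ) {d : ℤ × ℤ}
    (hd : d ≠ 0) :
    (#{x ∈ latticeBox R | primitivePart (x - q) = d} : ℝ) ≤ 2 * R / supNorm d + 1 := by
  obtain hempty | ⟨x, hx⟩ := {x ∈ latticeBox R | primitivePart (x - q) = d}.eq_empty_or_nonempty
  · rw [hempty, card_empty, Nat.cast_zero]
    positivity
  have hne {y} (hy : primitivePart (y - q) = d) : y - q ≠ 0 := by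
    intro h
    exact hd (by rw [← hy, h]; rfl)
  have hcop : IsCoprime d.2 (-d.1) := by
    have hxd := (mem_filter.mp hx).2
    exact (hxd ▸ isCoprime_primitivePart (hne hxd)).symm.neg_right
  have hsub : {x ∈ latticeBox R | primitivePart (x - q) = d} ⊆
      {x ∈ latticeBox R | dot (d.2, -d.1) x = dot (d.2, -d.1) q} := by
    refine monotone_filter_right _ fun y _ hy ↦ ?_
    obtain ⟨g, -, hg⟩ := exists_eq_smul_primitivePart (hne hy)
    rw [hy] at hg
    rw [← sub_add_cancel y q, hg]
    simp only [dot, Prod.fst_add, Prod.snd_add, Prod.smul_fst, Prod.smul_snd, smul_eq_mul]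
    ring
  have hnorm : supNorm (d.2, -d.1) = supNorm d := by
    rw [supNorm, supNorm, Int.natAbs_neg, max_comm]
  calc _ ≤ (#{x ∈ latticeBox R | dot (d.2, -d.1) x = dot (d.2, -d.1) q} : ℝ) := by
        exact_mod_cast card_le_card hsub
    _ ≤ _ := hnorm ▸ card_filter_dot_eq_le hcop hR _

lemma card_filter_supNorm_primitivePart_sub_eq_le {R : ℝ} {k : ℕ} (hk : 1 ≤ k) (hkR : k ≤ R)
    (q : ℤ × ℤ) : (#{x ∈ latticeBox R | supNorm (primitivePart (x - q)) = k} : ℝ) ≤ 24 * R := by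
  have hk₀ : (0 : ℝ) < k := by exact_mod_cast hk
  have hfiber : ∀ d ∈ (box k : Finset (ℤ × ℤ)),
      (#{x ∈ {x ∈ latticeBox R | supNorm (primitivePart (x - q)) = k} | primitivePart (x - q) = d}
        : ℝ) ≤ 3 * R / k := by
    intro d hd
    rw [Int.mem_box] at hd
    have hd₀ : d ≠ 0 := by
      rintro rfl
      simp at hd
      omega
    calc _ ≤ (#{x ∈ latticeBox R | primitivePart (x - q) = d} : ℝ) := by
          exact_mod_cast card_le_card (filter_subset_filter _ (filter_subset _ _))
      _ ≤ 2 * R / k + 1 :=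
          hd ▸ card_filter_primitivePart_sub_eq_le (hk₀.le.trans hkR) q hd₀
      _ ≤ 2 * R / k + R / k := by gcongr; exact (one_le_div hk₀).mpr hkR
      _ = 3 * R / k := by ring
  calc _ = ∑ d ∈ (box k : Finset (ℤ × ℤ)), (#{x ∈ {x ∈ latticeBox R |
          supNorm (primitivePart (x - q)) = k} | primitivePart (x - q) = d} : ℝ) := by
        exact_mod_cast card_eq_sum_card_fiberwise fun x hx ↦ Int.mem_box.mpr (mem_filter.mp hx).2
    _ ≤ ∑ _d ∈ (box k : Finset (ℤ × ℤ)), 3 * R / k := sum_le_sum hfiber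
    _ = 24 * R := by
        rw [sum_const, Int.card_box (by omega), nsmul_eq_mul]
        push_cast
        field_simp
        ring

lemma sum_inv_le {α : Type*} (s : Finset α) (h : α → ℕ) {R : ℝ} (hR : 0 < R) :
    ∑ x ∈ s, (h x : ℝ)⁻¹ ≤ ∑ k ∈ Icc 1 ⌊R⌋₊, #{x ∈ s | h x = k} * (k : ℝ)⁻¹ + #s * R⁻¹ := by
  have hpoint (x : α) :
      (h x : ℝ)⁻¹ ≤ ∑ k ∈ Icc 1 ⌊R⌋₊, (if h x = k then (k : ℝ)⁻¹ else 0) + R⁻¹ := by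
    rw [sum_ite_eq]
    split_ifs with hx
    · exact le_add_of_nonneg_right (by positivity)
    rw [zero_add]
    obtain h₀ | h₀ := (h x).eq_zero_or_pos
    · rw [h₀, Nat.cast_zero, inv_zero]
      positivity
    · have hfloor : ⌊R⌋₊ < h x := by
        by_contra! hle
        exact hx (mem_Icc.mpr ⟨h₀, hle⟩)
      exact inv_anti₀ hR (Nat.lt_of_floor_lt hfloor).le
  calc _ ≤ ∑ x ∈ s, (∑ k ∈ Icc 1 ⌊R⌋₊, (if h x = k then (k : ℝ)⁻¹ else 0) + R⁻¹) :=
        sum_le_sum fun x _ ↦ hpoint x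
    _ = _ := by
        rw [sum_add_distrib, sum_comm, sum_const, nsmul_eq_mul]
        simp only [← sum_filter, sum_const, nsmul_eq_mul]

lemma sum_inv_supNorm_primitivePart_sub_le {R : ℝ} (hR : 1 ≤ R) (q : ℤ × ℤ) :
    ∑ x ∈ latticeBox R, (supNorm (primitivePart (x - q)) : ℝ)⁻¹ ≤
      24 * R * (1 + Real.log R) + 9 * R := by
  have hR₀ : 0 < R := by linarith
  have hharmonic : ∑ k ∈ Icc 1 ⌊R⌋₊, (k : ℝ)⁻¹ ≤ 1 + Real.log R := by
    have := harmonic_floor_le_one_add_log R hR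
    rw [harmonic_eq_sum_Icc] at this
    push_cast at this
    exact this
  calc _ ≤ ∑ k ∈ Icc 1 ⌊R⌋₊, #{x ∈ latticeBox R | supNorm (primitivePart (x - q)) = k} *
          (k : ℝ)⁻¹ + #(latticeBox R) * R⁻¹ := sum_inv_le _ _ hR₀
    _ ≤ ∑ k ∈ Icc 1 ⌊R⌋₊, 24 * R * (k : ℝ)⁻¹ + 9 * R ^ 2 * R⁻¹ := by
        gcongr with k hk
        · obtain ⟨hk₁, hkR⟩ := mem_Icc.mp hk
          exact card_filter_supNorm_primitivePart_sub_eq_le hk₁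
            ((Nat.le_floor_iff hR₀.le).mp hkR) q
        · exact card_latticeBox_le hR
    _ = 24 * R * ∑ k ∈ Icc 1 ⌊R⌋₊, (k : ℝ)⁻¹ + 9 * R := by
        rw [mul_sum]
        field_simp
    _ ≤ 24 * R * (1 + Real.log R) + 9 * R := by gcongr

theorem card_filter_dot_sub_eq_le {R S : ℝ} (hR : 1 ≤ R) (hRS : R ≤ S) (q : ℤ × ℤ)
    (c : ℤ × ℤ → ℤ) :
    (#{t ∈ latticeBox R ×ˢ latticeBox S | t.1 ≠ q ∧ dot (t.1 - q) t.2 = c t.1} : ℝ) ≤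
      75 * (R * S * (1 + Real.log R)) := by
  have hS : 0 ≤ S := by linarith
  have hlog : 0 ≤ Real.log R := Real.log_nonneg hR
  have hline (x : ℤ × ℤ) : (#{y ∈ latticeBox S | x ≠ q ∧ dot (x - q) y = c x} : ℝ) ≤
      2 * S * (supNorm (primitivePart (x - q)) : ℝ)⁻¹ + 1 := by
    by_cases hx : x = q
    · simp only [hx, ne_eq, not_true_eq_false, false_and, filter_false, card_empty, Nat.cast_zero]
      positivity
    · simp only [ne_eq, hx, not_false_eq_true, true_and, ← div_eq_mul_inv]
      exact card_filter_dot_eq_le_of_ne_zero (sub_ne_zero.mpr hx) hS _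
  calc _ = ∑ x ∈ latticeBox R, (#{y ∈ latticeBox S | x ≠ q ∧ dot (x - q) y = c x} : ℝ) := by
        simp only [card_filter, sum_product]
        push_cast
        rfl
    _ ≤ ∑ x ∈ latticeBox R, (2 * S * (supNorm (primitivePart (x - q)) : ℝ)⁻¹ + 1) :=
        sum_le_sum fun x _ ↦ hline x
    _ = 2 * S * ∑ x ∈ latticeBox R, (supNorm (primitivePart (x - q)) : ℝ)⁻¹ +
          #(latticeBox R) := by
        rw [sum_add_distrib, ← mul_sum, sum_const, nsmul_one]
    _ ≤ 2 * S * (24 * R * (1 + Real.log R) + 9 * R) + 9 * (R * S) := by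
        gcongr
        · exact sum_inv_supNorm_primitivePart_sub_le hR q
        · exact (card_latticeBox_le hR).trans (by rw [sq]; gcongr)
    _ = 48 * (R * S * (1 + Real.log R)) + 27 * (R * S) := by ring
    _ ≤ 75 * (R * S * (1 + Real.log R)) := by
        have : R * S ≤ R * S * (1 + Real.log R) :=
          le_mul_of_one_le_right (by positivity) (by linarith)
        linarith

/-! ### Resonant triples -/

/-- The triples `(n, n₁, n₃)` completing `n₂ = q` to a quadruple with `n = n₁ - n₂ + n₃`,
`n ≠ n₁`, `n ≠ n₃` and `φ = m`, localized to boxes instead of dyadic annuli. -/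
noncomputable def resonantTriples (N N₁ N₃ : ℝ) (m : ℤ) (q : ℤ × ℤ) :
    Finset ((ℤ × ℤ) × (ℤ × ℤ) × (ℤ × ℤ)) :=
  {t ∈ latticeBox N ×ˢ latticeBox N₁ ×ˢ latticeBox N₃ |
    t.1 = t.2.1 - q + t.2.2 ∧ t.1 ≠ t.2.1 ∧ t.1 ≠ t.2.2 ∧ phiFn t.1 t.2.1 q t.2.2 = m}

section ResonantTriples

variable {N N₁ N₃ ε : ℝ} {m : ℤ} {q n n₁ n₃ k₃ : ℤ × ℤ}

lemma mem_resonantTriples : (n, n₁, n₃) ∈ resonantTriples N N₁ N₃ m q ↔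
    (n ∈ latticeBox N ∧ n₁ ∈ latticeBox N₁ ∧ n₃ ∈ latticeBox N₃) ∧
      n = n₁ - q + n₃ ∧ n ≠ n₁ ∧ n ≠ n₃ ∧ phiFn n n₁ q n₃ = m := by
  rw [resonantTriples, mem_filter, mem_product, mem_product]

lemma phiFn_eq_two_mul_dot (h : n = n₁ - q + n₃) :
    phiFn n n₁ q n₃ = 2 * dot (n₁ - q) (n₃ - q) := by
  subst h
  simp only [phiFn, nsq, dot, Prod.fst_add, Prod.snd_add, Prod.fst_sub, Prod.snd_sub]
  ring

lemma ne_and_dot_eq_of_mem_resonantTriples (h : (n, n₁, n₃) ∈ resonantTriples N N₁ N₃ m q) :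
    n₁ ≠ q ∧ dot (n₁ - q) (n₃ - q) = m / 2 := by
  obtain ⟨-, hn, -, hn₃, hφ⟩ := mem_resonantTriples.mp h
  refine ⟨fun h₁ ↦ hn₃ (by rw [hn, h₁, sub_self, zero_add]), ?_⟩
  rw [phiFn_eq_two_mul_dot hn] at hφ
  omega

lemma dot_sub (x y z : ℤ × ℤ) : dot x (y - z) = dot x y - dot x z := by
  simp only [dot, Prod.fst_sub, Prod.snd_sub]
  ring

lemma eq_of_mem_resonantTriples (h : (n, n₁, n₃) ∈ resonantTriples N N₁ N₃ m q)
    (h' : (n, n₁, k₃) ∈ resonantTriples N N₁ N₃ m q) : n₃ = k₃ :=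
  add_left_cancel ((mem_resonantTriples.mp h).2.1.symm.trans (mem_resonantTriples.mp h').2.1)

lemma card_resonantTriples_swap_le :
    #(resonantTriples N N₁ N₃ m q) ≤ #(resonantTriples N N₃ N₁ m q) := by
  refine card_le_card_of_injOn (Prod.map id Prod.swap) ?_
    (Function.injective_id.prodMap Prod.swap_injective).injOn
  rintro ⟨n, n₁, n₃⟩ h
  obtain ⟨⟨hN, hN₁, hN₃⟩, hn, hne₁, hne₃, hφ⟩ := mem_resonantTriples.mp h
  have hn' : n = n₃ - q + n₁ := by rw [hn]; abel
  have hφ' : phiFn n n₃ q n₁ = m := by rw [← hφ, phiFn, phiFn]; ring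
  exact mem_resonantTriples.mpr ⟨⟨hN, hN₃, hN₁⟩, hn', hne₃, hne₁, hφ'⟩

lemma nsq_two_smul_sub_eq (h : (n, n₁, n₃) ∈ resonantTriples N N₁ N₃ m q) :
    nsq (2 • n₁ - (n + q)) = nsq (n - q) - 2 * m := by
  obtain ⟨-, hn, -, -, hφ⟩ := mem_resonantTriples.mp h
  rw [← hφ, phiFn_eq_two_mul_dot hn, hn]
  simp only [nsq, dot, Prod.fst_add, Prod.snd_add, Prod.fst_sub, Prod.snd_sub, Prod.smul_fst,
    Prod.smul_snd]
  ring

lemma nsq_two_smul_sub_two_smul_le {R : ℝ} (hR : 0 ≤ R) {x y : ℤ × ℤ} (hx : x ∈ latticeBox R)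
    (hy : y ∈ latticeBox R) : (nsq (2 • x - 2 • y) : ℝ) ≤ 32 * R ^ 2 := by
  have hcoord {z : ℤ × ℤ} (hz : z ∈ latticeBox R) : |(z.1 : ℝ)| ≤ R ∧ |(z.2 : ℝ)| ≤ R := by
    have := (mem_latticeBox hR).mp hz
    rwa [supNorm, Nat.cast_max, max_le_iff, Nat.cast_natAbs, Nat.cast_natAbs, Int.cast_abs,
      Int.cast_abs] at this
  have hsq {u v : ℤ} (hu : |(u : ℝ)| ≤ R) (hv : |(v : ℝ)| ≤ R) :
      (2 * u - 2 * v : ℝ) ^ 2 ≤ (4 * R) ^ 2 := by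
    rw [abs_le] at hu hv
    exact sq_le_sq' (by linarith) (by linarith)
  calc (nsq (2 • x - 2 • y) : ℝ) = (2 * x.1 - 2 * y.1 : ℝ) ^ 2 + (2 * x.2 - 2 * y.2 : ℝ) ^ 2 := by
        simp [nsq]
    _ ≤ (4 * R) ^ 2 + (4 * R) ^ 2 :=
        add_le_add (hsq (hcoord hx).1 (hcoord hy).1) (hsq (hcoord hx).2 (hcoord hy).2)
    _ = 32 * R ^ 2 := by ring

lemma exists_card_filter_fst_eq_le_rpow (hε : 0 < ε) :
    ∃ C : ℝ, 0 < C ∧ ∀ {N N₁ N₃ : ℝ}, 1 ≤ N₁ → ∀ (m : ℤ) (q n : ℤ × ℤ),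
      (#{t ∈ resonantTriples N N₁ N₃ m q | t.1 = n} : ℝ) ≤ C * N₁ ^ ε := by
  obtain ⟨C, hC, hcircle⟩ := exists_card_le_rpow_of_forall_nsq_eq (half_pos hε)
  refine ⟨C * 32 ^ (ε / 2), by positivity, fun {N N₁ N₃} hN₁ m q n ↦ ?_⟩
  set T := {t ∈ resonantTriples N N₁ N₃ m q | t.1 = n}
  let z (t : (ℤ × ℤ) × (ℤ × ℤ) × (ℤ × ℤ)) : ℤ × ℤ := 2 • t.2.1 - (n + q)
  have hT : ∀ t ∈ T, t.1 = n ∧ (n, t.2.1, t.2.2) ∈ resonantTriples N N₁ N₃ m q := by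
    intro t ht
    obtain ⟨hmem, rfl⟩ := mem_filter.mp ht
    exact ⟨rfl, hmem⟩
  have hinj : Set.InjOn z T := by
    intro t ht s hs hz
    obtain ⟨htn, ht⟩ := hT t ht
    obtain ⟨hsn, hs⟩ := hT s hs
    have h₁ : t.2.1 = s.2.1 := smul_right_injective _ two_ne_zero (sub_left_injective hz)
    rw [← h₁] at hs
    exact Prod.ext (htn.trans hsn.symm) (Prod.ext h₁ (eq_of_mem_resonantTriples ht hs))
  have hnsq : ∀ x ∈ T.image z, nsq x = nsq (n - q) - 2 * m :=
    forall_mem_image.mpr fun t ht ↦ nsq_two_smul_sub_eq (hT t ht).2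
  have hdist : ∀ x ∈ T.image z, ∀ y ∈ T.image z, (nsq (x - y) : ℝ) ≤ 32 * N₁ ^ 2 := by
    have hmem : ∀ t ∈ T, t.2.1 ∈ latticeBox N₁ := fun t ht ↦
      (mem_resonantTriples.mp (hT t ht).2).1.2.1
    simp only [forall_mem_image, z, sub_sub_sub_cancel_right]
    exact fun t ht s hs ↦ nsq_two_smul_sub_two_smul_le (by linarith) (hmem t ht) (hmem s hs)
  calc (#T : ℝ) = #(T.image z) := by rw [card_image_of_injOn hinj]
    _ ≤ C * (32 * N₁ ^ 2) ^ (ε / 2) := hcircle _ _ _ (by nlinarith) hnsq hdist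
    _ = C * 32 ^ (ε / 2) * N₁ ^ ε := by
        rw [Real.mul_rpow (by norm_num) (by positivity), ← Real.rpow_natCast_mul (by linarith),
          Nat.cast_ofNat, mul_div_cancel₀ ε two_ne_zero, mul_assoc]

lemma exists_card_resonantTriples_le_sq_mul_rpow (hε : 0 < ε) :
    ∃ C : ℝ, 0 < C ∧ ∀ {N N₁ N₃ : ℝ}, 1 ≤ N → 1 ≤ N₁ → ∀ (m : ℤ) (q : ℤ × ℤ),
      (#(resonantTriples N N₁ N₃ m q) : ℝ) ≤ C * (N ^ 2 * N₁ ^ ε) := by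
  obtain ⟨C, hC, hfiber⟩ := exists_card_filter_fst_eq_le_rpow hε
  refine ⟨9 * C, by positivity, fun {N N₁ N₃} hN hN₁ m q ↦ ?_⟩
  calc (#(resonantTriples N N₁ N₃ m q) : ℝ)
      = ∑ n ∈ latticeBox N, (#{t ∈ resonantTriples N N₁ N₃ m q | t.1 = n} : ℝ) := by
        exact_mod_cast card_eq_sum_card_fiberwise fun t ht ↦ (mem_resonantTriples.mp ht).1.1
    _ ≤ ∑ _n ∈ latticeBox N, C * N₁ ^ ε := sum_le_sum fun n _ ↦ hfiber hN₁ m q n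
    _ = #(latticeBox N) * (C * N₁ ^ ε) := by rw [sum_const, nsmul_eq_mul]
    _ ≤ 9 * N ^ 2 * (C * N₁ ^ ε) := by gcongr; exact card_latticeBox_le hN
    _ = 9 * C * (N ^ 2 * N₁ ^ ε) := by ring

lemma mul_mul_one_add_log_le {R S : ℝ} (hε : 0 < ε) (hR : 1 ≤ R) (hS : 1 ≤ S) :
    R * S * (1 + Real.log R) ≤ (1 + 1 / ε) * (R * S) ^ (1 + ε) := by
  have hRS : 1 ≤ R * S := one_le_mul_of_one_le_of_one_le hR hS
  have hlog : Real.log R ≤ (R * S) ^ ε / ε :=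
    (Real.log_le_rpow_div (by linarith) hε).trans (by gcongr; nlinarith)
  calc R * S * (1 + Real.log R) ≤ R * S * ((R * S) ^ ε + (R * S) ^ ε / ε) := by
        gcongr
        exact Real.one_le_rpow hRS hε.le
    _ = (1 + 1 / ε) * (R * S) ^ (1 + ε) := by
        rw [Real.rpow_add (by linarith), Real.rpow_one]
        ring

lemma card_resonantTriples_le_of_fst_le_snd (hN₁ : 1 ≤ N₁) (hN₁₃ : N₁ ≤ N₃) :
    (#(resonantTriples N N₁ N₃ m q) : ℝ) ≤ 75 * (N₁ * N₃ * (1 + Real.log N₁)) := by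
  refine le_trans ?_ (card_filter_dot_sub_eq_le hN₁ hN₁₃ q fun x ↦ m / 2 + dot (x - q) q)
  norm_cast
  refine card_le_card_of_injOn (fun t ↦ (t.2.1, t.2.2)) ?_ ?_
  · rintro ⟨n, n₁, n₃⟩ h
    obtain ⟨hne, hdot⟩ := ne_and_dot_eq_of_mem_resonantTriples h
    rw [dot_sub] at hdot
    exact mem_filter.mpr
      ⟨mem_product.mpr (mem_resonantTriples.mp h).1.2, hne, eq_add_of_sub_eq hdot⟩
  · rintro ⟨n, n₁, n₃⟩ h ⟨k, k₁, k₃⟩ h' heq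
    obtain ⟨rfl, rfl⟩ := Prod.mk.inj heq
    rw [(mem_resonantTriples.mp h).2.1, (mem_resonantTriples.mp h').2.1]

lemma card_resonantTriples_le_of_fst_le (hN₁ : 1 ≤ N₁) (hN₁N : N₁ ≤ N) :
    (#(resonantTriples N N₁ N₃ m q) : ℝ) ≤ 75 * (N₁ * N * (1 + Real.log N₁)) := by
  refine le_trans ?_ (card_filter_dot_sub_eq_le hN₁ hN₁N q fun x ↦ m / 2 + dot (x - q) x)
  norm_cast
  refine card_le_card_of_injOn (fun t ↦ (t.2.1, t.1)) ?_ ?_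
  · rintro ⟨n, n₁, n₃⟩ h
    obtain ⟨hne, hdot⟩ := ne_and_dot_eq_of_mem_resonantTriples h
    obtain ⟨⟨hnN, hn₁, -⟩, hn, -⟩ := mem_resonantTriples.mp h
    rw [show n₃ - q = n - n₁ by rw [hn]; abel, dot_sub] at hdot
    exact mem_filter.mpr ⟨mem_product.mpr ⟨hn₁, hnN⟩, hne, eq_add_of_sub_eq hdot⟩
  · rintro ⟨n, n₁, n₃⟩ h ⟨k, k₁, k₃⟩ h' heq
    obtain ⟨rfl, rfl⟩ := Prod.mk.inj heq
    rw [eq_of_mem_resonantTriples h h']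

lemma card_resonantTriples_le_mul_rpow (hε : 0 < ε) (hN₁ : 1 ≤ N₁) (hN₃ : 1 ≤ N₃) :
    (#(resonantTriples N N₁ N₃ m q) : ℝ) ≤ 75 * (1 + 1 / ε) * (N₁ * N₃) ^ (1 + ε) := by
  wlog hle : N₁ ≤ N₃ generalizing N₁ N₃
  · rw [mul_comm N₁]
    exact (Nat.cast_le.mpr card_resonantTriples_swap_le).trans (this hN₃ hN₁ (le_of_not_ge hle))
  calc _ ≤ 75 * (N₁ * N₃ * (1 + Real.log N₁)) := card_resonantTriples_le_of_fst_le_snd hN₁ hle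
    _ ≤ 75 * ((1 + 1 / ε) * (N₁ * N₃) ^ (1 + ε)) := by
        gcongr 75 * ?_
        exact mul_mul_one_add_log_le hε hN₁ hN₃
    _ = 75 * (1 + 1 / ε) * (N₁ * N₃) ^ (1 + ε) := by ring

lemma sq_mul_rpow_le_mul_rpow {R S : ℝ} (hε : 0 ≤ ε) (hR : 1 ≤ R) (hRS : R ≤ S) :
    R ^ 2 * S ^ ε ≤ (R * S) ^ (1 + ε) := by
  have hS : 1 ≤ S := hR.trans hRS
  calc R ^ 2 * S ^ ε ≤ R * S * (R * S) ^ ε := by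
        rw [sq]
        gcongr
        nlinarith
    _ = (R * S) ^ (1 + ε) := by rw [Real.rpow_add (by positivity), Real.rpow_one]

lemma exists_card_resonantTriples_le_mul_rpow (hε : 0 < ε) :
    ∃ C : ℝ, 0 < C ∧ ∀ {N N₁ N₃ : ℝ}, 1 ≤ N → 1 ≤ N₁ → ∀ (m : ℤ) (q : ℤ × ℤ),
      (#(resonantTriples N N₁ N₃ m q) : ℝ) ≤ C * (N * N₁) ^ (1 + ε) := by
  obtain ⟨C, hC, hsq⟩ := exists_card_resonantTriples_le_sq_mul_rpow hε
  refine ⟨max C (75 * (1 + 1 / ε)), lt_max_of_lt_left hC, fun {N N₁ N₃} hN hN₁ m q ↦ ?_⟩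
  obtain hle | hle := le_total N N₁
  · calc _ ≤ C * (N ^ 2 * N₁ ^ ε) := hsq hN hN₁ m q
      _ ≤ _ := by
        gcongr
        · exact le_max_left ..
        · exact sq_mul_rpow_le_mul_rpow hε.le hN hle
  · calc _ ≤ 75 * (N₁ * N * (1 + Real.log N₁)) := card_resonantTriples_le_of_fst_le hN₁ hle
      _ ≤ 75 * ((1 + 1 / ε) * (N₁ * N) ^ (1 + ε)) := by
        gcongr 75 * ?_
        exact mul_mul_one_add_log_le hε hN₁ hN
      _ = 75 * (1 + 1 / ε) * (N * N₁) ^ (1 + ε) := by ring_nf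
      _ ≤ _ := by gcongr; exact le_max_right ..

end ResonantTriples

theorem stmt7_general (ε : ℝ) (hε : 0 < ε) :
    ∃ C : ℝ, 0 < C ∧ ∀ N N₁ N₃ : ℝ, 1 ≤ N → 1 ≤ N₁ → 1 ≤ N₃ → ∀ (m : ℤ) (n₂ : ℤ × ℤ),
      (#(resonantTriples N N₁ N₃ m n₂) : ℝ) ≤
        C * min (min (N ^ 2 * (min N₁ N₃) ^ ε) ((N * N₁) ^ (1 + ε)))
                (min ((N * N₃) ^ (1 + ε)) ((N₁ * N₃) ^ (1 + ε))) := by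
  obtain ⟨C₁, hC₁, hsq⟩ := exists_card_resonantTriples_le_sq_mul_rpow hε
  obtain ⟨C₂, hC₂, hmul⟩ := exists_card_resonantTriples_le_mul_rpow hε
  refine ⟨C₁ + C₂ + 75 * (1 + 1 / ε), by positivity, fun N N₁ N₃ hN hN₁ hN₃ m n₂ ↦ ?_⟩
  have hε' : 0 < 75 * (1 + 1 / ε) := by positivity
  have hswap : (#(resonantTriples N N₁ N₃ m n₂) : ℝ) ≤ #(resonantTriples N N₃ N₁ m n₂) :=
    Nat.cast_le.mpr card_resonantTriples_swap_le
  simp only [mul_min_of_nonneg _ _ (by positivity : 0 ≤ C₁ + C₂ + 75 * (1 + 1 / ε)), le_min_iff]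
  refine ⟨⟨?_, ?_⟩, ?_, ?_⟩
  · have hsq_min : (#(resonantTriples N N₁ N₃ m n₂) : ℝ) ≤ C₁ * (N ^ 2 * (min N₁ N₃) ^ ε) := by
      obtain h | h := min_choice N₁ N₃ <;> rw [h]
      · exact hsq hN hN₁ m n₂
      · exact hswap.trans (hsq hN hN₃ m n₂)
    exact hsq_min.trans (by gcongr; linarith)
  · exact (hmul hN hN₁ m n₂).trans (by gcongr; linarith)
  · exact (hswap.trans (hmul hN hN₃ m n₂)).trans (by gcongr; linarith)
  · exact (card_resonantTriples_le_mul_rpow hε hN₁ hN₃).trans (by gcongr; linarith)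

lemma IsDyadic.one_le {N : ℝ} (hN : IsDyadic N) : 1 ≤ N := by
  obtain ⟨k, rfl⟩ := hN
  exact one_le_pow₀ one_le_two

lemma supNorm_le_znorm (x : ℤ × ℤ) : (supNorm x : ℝ) ≤ znorm x := by
  rw [supNorm, Nat.cast_max, Nat.cast_natAbs, Nat.cast_natAbs, Int.cast_abs, Int.cast_abs]
  exact max_le (Real.abs_le_sqrt (le_add_of_nonneg_right (sq_nonneg _)))
    (Real.abs_le_sqrt (le_add_of_nonneg_left (sq_nonneg _)))

lemma simDyadic.mem_latticeBox {N : ℝ} {x : ℤ × ℤ} (h : simDyadic N x) : x ∈ latticeBox N := by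
  have hxN : znorm x ≤ N := by
    obtain ⟨rfl, hx⟩ | ⟨-, -, hx⟩ := h <;> exact hx
  exact (_root_.mem_latticeBox ((Real.sqrt_nonneg _).trans hxN)).mpr
    ((supNorm_le_znorm x).trans hxN)

lemma SMem.mem_resonantTriples {N N₁ N₂ N₃ : ℝ} {m : ℤ} {n n₁ n₂ n₃ : ℤ × ℤ}
    (h : SMem N N₁ N₂ N₃ m n n₁ n₂ n₃) : (n, n₁, n₃) ∈ resonantTriples N N₁ N₃ m n₂ := by
  obtain ⟨hn, hne₁, hne₃, hφ, hN, hN₁, -, hN₃⟩ := h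
  exact _root_.mem_resonantTriples.mpr
    ⟨⟨hN.mem_latticeBox, hN₁.mem_latticeBox, hN₃.mem_latticeBox⟩, hn, hne₁, hne₃, hφ⟩

lemma ncard_setOf_SMem_le (N N₁ N₂ N₃ : ℝ) (m : ℤ) (n₂ : ℤ × ℤ) :
    {t : (ℤ × ℤ) × (ℤ × ℤ) × (ℤ × ℤ) | SMem N N₁ N₂ N₃ m t.1 t.2.1 n₂ t.2.2}.ncard ≤
      #(resonantTriples N N₁ N₃ m n₂) := by
  rw [← Set.ncard_coe_finset]
  exact Set.ncard_le_ncard (fun _ ht ↦ ht.mem_resonantTriples)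

theorem stmt7 (ε : ℝ) (hε : 0 < ε) :
    ∃ C : ℝ, 0 < C ∧ ∀ N N₁ N₂ N₃ : ℝ,
      IsDyadic N → IsDyadic N₁ → IsDyadic N₂ → IsDyadic N₃ → ∀ m : ℤ, ∀ n₂ : ℤ × ℤ,
      (({t : (ℤ × ℤ) × (ℤ × ℤ) × (ℤ × ℤ) |
          SMem N N₁ N₂ N₃ m t.1 t.2.1 n₂ t.2.2}).ncard : ℝ) ≤
        C * min (min (N ^ 2 * (min N₁ N₃) ^ ε) ((N * N₁) ^ (1 + ε)))
                (min ((N * N₃) ^ (1 + ε)) ((N₁ * N₃) ^ (1 + ε))) := by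
  obtain ⟨C, hC, hcard⟩ := stmt7_general ε hε
  exact ⟨C, hC, fun N N₁ N₂ N₃ hN hN₁ _ hN₃ m n₂ ↦
    (Nat.cast_le.mpr (ncard_setOf_SMem_le N N₁ N₂ N₃ m n₂)).trans
      (hcard N N₁ N₃ hN.one_le hN₁.one_le hN₃.one_le m n₂)⟩
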